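/- Let A, ℓ, r be positive integers and let a₁, a₂ be distinct divisors of A with a₁·σ(a₂) = a₂·σ(a₁). Set bᵢ = A/aᵢ and pᵢ = bᵢ·r − 1 for i = 1, 2. Suppose gcd(ℓ, A) = 1, r > A, each pᵢ is prime, and pᵢ does not divide ℓ for i = 1, 2. Then the numbers tᵢ = ℓ·aᵢ·pᵢ satisfy t₁ = Aℓr − ℓa₁, t₂ = Aℓr − ℓa₂, and σ(t₁) = σ(t₂). -/

import Mathlib

/-- The sum-of-divisors function `σ`. -/
def sigma (n : ℕ) : ℕ := ∑ d ∈ n.divisors, d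

theorem sigma_eq_aux (n : ℕ) : sigma n = ArithmeticFunction.sigma 1 n := by
  rw [ArithmeticFunction.sigma_one_apply]; rfl

theorem sigma_mul_aux {m n : ℕ} (h : Nat.Coprime m n) : sigma (m * n) = sigma m * sigma n := by
  simp only [sigma_eq_aux]
  exact ArithmeticFunction.isMultiplicative_sigma.map_mul_of_coprime h

theorem sigma_prime_aux {p : ℕ} (h : p.Prime) : sigma p = p + 1 := by
  rw [sigma, Nat.Prime.sum_divisors h, add_comm]

theorem half_aux (A ℓ r : ℕ) (hApos : 0 < A) (hr : 0 < r)
    (a c b p : ℕ) (hb : a * b = A) (hc : c ∣ A) (hne : a ≠ c)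
    (hfriend : a * sigma c = c * sigma a)
    (hp : p = b * r - 1) (hcop : Nat.gcd ℓ A = 1) (hrA : A < r)
    (hpp : p.Prime) (hnd : ¬ p ∣ ℓ) :
    ℓ * a * p = A * ℓ * r - ℓ * a ∧ sigma (ℓ * a * p) = sigma ℓ * (sigma a * b) * r := by
  have hbpos : 0 < b := by
    rcases Nat.eq_zero_or_pos b with h | h
    · subst h; omega
    · exact h
  have hapos : 0 < a := by
    rcases Nat.eq_zero_or_pos a with h | h
    · subst h; omega
    · exact h
  have hbr : r ≤ b * r := Nat.le_mul_of_pos_left r hbpos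
  have hp1 : p + 1 = b * r := by omega
  have haA : a ≤ A := Nat.le_of_dvd hApos ⟨b, hb.symm⟩
  have hna : ¬ p ∣ a := by
    intro hd
    have h1 := Nat.le_of_dvd hapos hd
    have h2 : p = A := by omega
    have h3 : a = A := by omega
    rw [← h2] at hc h3
    rcases (Nat.dvd_prime hpp).1 hc with h | h
    · subst h
      subst h3
      rw [sigma_prime_aux hpp] at hfriend
      have : sigma 1 = 1 := by simp [sigma]
      rw [this] at hfriend
      omega
    · omega
  have hla : Nat.Coprime ℓ a := Nat.Coprime.coprime_dvd_right ⟨b, hb.symm⟩ hcop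
  have hlp : Nat.Coprime (ℓ * a) p := by
    apply Nat.Coprime.symm
    rw [hpp.coprime_iff_not_dvd, hpp.dvd_mul]
    tauto
  constructor
  · apply Nat.eq_sub_of_add_eq
    calc ℓ * a * p + ℓ * a = ℓ * a * (p + 1) := by ring
      _ = A * ℓ * r := by rw [hp1, ← hb]; ring
  · rw [sigma_mul_aux hlp, sigma_mul_aux hla, sigma_prime_aux hpp, hp1]; ring

/-- If `a₁ ≠ a₂` divide `A` with `σ(a₁)/a₁ = σ(a₂)/a₂`, `bᵢ = A/aᵢ`,
`pᵢ = bᵢr - 1` prime with `pᵢ ∤ ℓ`, `gcd(ℓ,A) = 1` and `r > A`, then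
`tᵢ = ℓ·aᵢ·pᵢ` satisfy `tᵢ = Aℓr - ℓaᵢ` and `σ(t₁) = σ(t₂)`. -/
theorem stmt_14 (A ℓ r : ℕ) (hApos : 0 < A) (hl : 0 < ℓ) (hr : 0 < r)
    (a₁ a₂ : ℕ) (ha₁ : a₁ ∣ A) (ha₂ : a₂ ∣ A) (hne : a₁ ≠ a₂)
    (hfriend : a₁ * sigma a₂ = a₂ * sigma a₁)
    (b₁ b₂ p₁ p₂ t₁ t₂ : ℕ)
    (hb₁ : b₁ = A / a₁) (hb₂ : b₂ = A / a₂)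
    (hp₁ : p₁ = b₁ * r - 1) (hp₂ : p₂ = b₂ * r - 1)
    (hcop : Nat.gcd ℓ A = 1) (hrA : A < r)
    (hp₁p : p₁.Prime) (hp₂p : p₂.Prime)
    (hnd₁ : ¬ p₁ ∣ ℓ) (hnd₂ : ¬ p₂ ∣ ℓ)
    (ht₁ : t₁ = ℓ * a₁ * p₁) (ht₂ : t₂ = ℓ * a₂ * p₂) :
    t₁ = A * ℓ * r - ℓ * a₁ ∧ t₂ = A * ℓ * r - ℓ * a₂ ∧ sigma t₁ = sigma t₂ := by
  have e₁ : a₁ * b₁ = A := by rw [hb₁]; exact Nat.mul_div_cancel' ha₁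
  have e₂ : a₂ * b₂ = A := by rw [hb₂]; exact Nat.mul_div_cancel' ha₂
  obtain ⟨h1, h2⟩ := half_aux A ℓ r hApos hr a₁ a₂ b₁ p₁ e₁ ha₂ hne hfriend hp₁ hcop hrA hp₁p hnd₁
  obtain ⟨h3, h4⟩ := half_aux A ℓ r hApos hr a₂ a₁ b₂ p₂ e₂ ha₁ hne.symm hfriend.symm hp₂ hcop hrA
    hp₂p hnd₂
  subst ht₁ ht₂
  refine ⟨h1, h3, ?_⟩
  rw [h2, h4]
  have p1 : 0 < a₁ := Nat.pos_of_dvd_of_pos ha₁ hApos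
  have p2 : 0 < a₂ := Nat.pos_of_dvd_of_pos ha₂ hApos
  have key : sigma a₁ * b₁ = sigma a₂ * b₂ := by
    apply Nat.eq_of_mul_eq_mul_left (Nat.mul_pos p1 p2)
    calc a₁ * a₂ * (sigma a₁ * b₁) = (a₂ * sigma a₁) * (a₁ * b₁) := by ring
      _ = (a₁ * sigma a₂) * (a₂ * b₂) := by rw [← hfriend, e₁, e₂]
      _ = a₁ * a₂ * (sigma a₂ * b₂) := by ring
  rw [key]
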